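/- The cup product is graded commutative up to a coboundary on cocycles: if D ∈ C^d(A) and E ∈ C^e(A) satisfy δD = 0 and δE = 0, then D⌣E − (−1)^{de} E⌣D lies in the image of δ : C^{d+e−1}(A) → C^{d+e}(A) (an explicit primitive is given, up to sign, by the circle product D∘E). In particular the cup product induces a graded commutative product on Hochschild cohomology. -/

import Mathlib

namespace NCCalc

variable {K A : Type*}

/-- Extend a finite tuple to a sequence by zero. -/
def pad [Zero A] {n : ℕ} (a : Fin n → A) : ℕ → A :=
  fun i => if h : i < n then a ⟨i, h⟩ else 0

/-- Restrict a cochain given on sequences to a cochain of arity `n`. -/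
def res [Zero A] (n : ℕ) (F : (ℕ → A) → A) : (Fin n → A) → A :=
  fun a => F (pad a)

section AddCommGroupA
variable [AddCommGroup A]

/-- The circle (composition) product of Hochschild cochains:
`(D∘E)(a_1,…,a_{d+e−1}) = Σ_{j=0}^{d−1} (−1)^{(e+1)j} D(a_1,…,a_j, E(a_{j+1},…,a_{j+e}), …)`. -/
def circ (d e : ℕ) (D : (Fin d → A) → A) (E : (Fin e → A) → A) : (ℕ → A) → A :=
  fun a => ∑ j ∈ Finset.range d, ((-1 : ℤ) ^ ((e + 1) * j)) •
    D (fun i => if (i : ℕ) < j then a i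
        else if (i : ℕ) = j then E (fun t => a (j + (t : ℕ)))
        else a ((i : ℕ) + e - 1))

/-- The Gerstenhaber bracket `[D,E] = D∘E − (−1)^{(d+1)(e+1)} E∘D`. -/
def gbr (d e : ℕ) (D : (Fin d → A) → A) (E : (Fin e → A) → A) : (ℕ → A) → A :=
  fun a => circ d e D E a - ((-1 : ℤ) ^ ((d + 1) * (e + 1))) • circ e d E D a

end AddCommGroupA

section RingA
variable [Ring A]

/-- The cup product `(D⌣E)(a_1,…,a_{d+e}) = D(a_1,…,a_d)·E(a_{d+1},…,a_{d+e})`. -/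
def cup (d e : ℕ) (D : (Fin d → A) → A) (E : (Fin e → A) → A) : (ℕ → A) → A :=
  fun a => D (fun i => a (i : ℕ)) * E (fun i => a (d + (i : ℕ)))

/-- The Hochschild differential
`(δD)(a_1,…,a_{d+1}) = D(a_1,…,a_d)·a_{d+1} + (−1)^{d+1} a_1·D(a_2,…,a_{d+1})
  + Σ_{j=1}^{d} (−1)^{d+1+j} D(a_1,…,a_j a_{j+1},…,a_{d+1})` (indices shifted to start at 0). -/
def hdel (d : ℕ) (D : (Fin d → A) → A) : (ℕ → A) → A :=
  fun a => D (fun i => a (i : ℕ)) * a d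
    + ((-1 : ℤ) ^ (d + 1)) • (a 0 * D (fun i => a ((i : ℕ) + 1)))
    + ∑ j ∈ Finset.range d, ((-1 : ℤ) ^ (d + 1 + (j + 1))) •
        D (fun i => if (i : ℕ) < j then a i
            else if (i : ℕ) = j then a j * a (j + 1)
            else a ((i : ℕ) + 1))

end RingA

/-- Hochschild `d`-cochains: `K`-multilinear maps `A^d → A`. -/
abbrev Cochain (K A : Type*) [CommRing K] [AddCommGroup A] [Module K A] (d : ℕ) :=
  MultilinearMap K (fun _ : Fin d => A) A

/-!
The theorem is the case `δD = 0`, `δE = 0` of Gerstenhaber's homotopy formula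
`δ(D ∘ E) = δD ∘ E + (-1)^(d+1) D ∘ δE - (-1)^((e+1)d) (D ⌣ E - (-1)^(de) E ⌣ D)`.
To prove it, write `D ∘ E` as a signed sum of partial compositions `D ∘ⱼ E`. In `δ(D ∘ⱼ E)`, the
products formed inside the block of arguments of `E` are the inner terms of `D ∘ⱼ δE`; its two outer
terms, in which `E` is multiplied by a neighbouring argument, are also terms of `δD`, as are the
products formed away from the block. Up to signs, `δ(D ∘ⱼ E)` is therefore `D ∘ⱼ δE` plus the part
of `δD` from position `j` rightwards with `E` in place `j`, plus the part up to position `j` with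
`E` in place `j + 1`. Summed over `j < d`, the two parts with `E` in the same place recombine to
`δD ∘ E`; only the right part for place `d`, which is `D ⌣ E`, and the left part for place `0`,
which is `E ⌣ D`, are missing.
-/

section Sequences

/-- A function of `n` variables, evaluated on the first `n` entries of a sequence. It translates
cochains into functions of sequences, the form in which `circ`, `cup` and `hdel` return their
values; `res n` translates back. -/
def extend {n : ℕ} (F : (Fin n → A) → A) (a : ℕ → A) : A :=
  F fun i => a i

/-- The sequence in which the block `a j, …, a (j + e - 1)` is replaced by the single entry `y`.
The empty block `e = 0` is allowed: `y` is then inserted in front of `a j`. -/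
def replaceBlock (j e : ℕ) (y : A) (a : ℕ → A) : ℕ → A :=
  fun i => if i < j then a i else if i = j then y else a (i + e - 1)

/-- The sequence `a 0, …, a (j - 1), E (a j, …, a (j + e - 1)), a (j + e), …`. -/
def applyAt {e : ℕ} (j : ℕ) (E : (Fin e → A) → A) (a : ℕ → A) : ℕ → A :=
  replaceBlock j e (extend E fun i => a (j + i)) a

/-- The partial composition `D ∘ⱼ E`, plugging `E` into the `j`-th slot of `D`; the circle product
is the signed sum of these. -/
def circAt {d e : ℕ} (j : ℕ) (D : (Fin d → A) → A) (E : (Fin e → A) → A) (a : ℕ → A) : A :=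
  extend D (applyAt j E a)

/-- The sequence `a 0, …, a (k - 1), a k * a (k + 1), a (k + 2), …`. -/
def merge [Mul A] (k : ℕ) (a : ℕ → A) : ℕ → A :=
  replaceBlock k 2 (a k * a (k + 1)) a

theorem dependsOn_extend {n : ℕ} (F : (Fin n → A) → A) : DependsOn (extend F) (Set.Iio n) :=
  fun _ _ h => congrArg F (funext fun i => h i i.2)

theorem replaceBlock_congr {n j e : ℕ} (y : A) {a b : ℕ → A} (h : ∀ i < n + e - 1, a i = b i)
    (hj : j < n) : ∀ i < n, replaceBlock j e y a i = replaceBlock j e y b i := by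
  intro i hi
  unfold replaceBlock
  split_ifs
  · exact h _ (by omega)
  · rfl
  · exact h _ (by omega)

theorem replaceBlock_replaceBlock_of_lt {j k : ℕ} (h : k < j) (e f : ℕ) (y z : A) (a : ℕ → A) :
    replaceBlock j e y (replaceBlock k f z a) =
      replaceBlock k f z (replaceBlock (j + f - 1) e y a) := by
  funext i
  unfold replaceBlock
  grind

theorem replaceBlock_replaceBlock_of_mem {j k e : ℕ} (hjk : j ≤ k) (hk : k < j + e) (f : ℕ)
    (y z : A) (a : ℕ → A) :
    replaceBlock j e y (replaceBlock k f z a) = replaceBlock j (e + f - 1) y a := by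
  funext i
  unfold replaceBlock
  grind

theorem replaceBlock_eq_update (j e : ℕ) (y z : A) (a : ℕ → A) :
    replaceBlock j e y a = Function.update (replaceBlock j e z a) j y := by
  funext i
  unfold replaceBlock
  grind

theorem replaceBlock_update_of_lt {j p : ℕ} (h : p < j) (e : ℕ) (x y : A) (a : ℕ → A) :
    replaceBlock j e y (Function.update a p x) = Function.update (replaceBlock j e y a) p x := by
  funext i
  simp only [replaceBlock, Function.update_apply]
  grind

theorem replaceBlock_update_of_mem {j p e : ℕ} (hj : j ≤ p) (hp : p < j + e) (x y : A)
    (a : ℕ → A) : replaceBlock j e y (Function.update a p x) = replaceBlock j e y a := by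
  funext i
  simp only [replaceBlock, Function.update_apply]
  grind

theorem replaceBlock_update_of_ge {j p e : ℕ} (h : j + e ≤ p) (x y : A) (a : ℕ → A) :
    replaceBlock j e y (Function.update a p x) =
      Function.update (replaceBlock j e y a) (p + 1 - e) x := by
  funext i
  simp only [replaceBlock, Function.update_apply]
  grind

section Merge

variable [Mul A] {e : ℕ} (E : (Fin e → A) → A) (a : ℕ → A)

theorem applyAt_merge_of_lt {j k : ℕ} (h : k < j) :
    applyAt j E (merge k a) = merge k (applyAt (j + 1) E a) := by
  have block : (fun i => merge k a (j + i)) = fun i => a (j + 1 + i) := by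
    funext i
    simp only [merge, replaceBlock]
    grind
  have product : applyAt (j + 1) E a k * applyAt (j + 1) E a (k + 1) = a k * a (k + 1) := by
    simp only [applyAt, replaceBlock]
    grind
  rw [applyAt, block, merge, merge, product]
  exact replaceBlock_replaceBlock_of_lt h e 2 _ _ a

theorem applyAt_merge_of_mem {j m : ℕ} (h : m < e) :
    applyAt j E (merge (j + m) a) =
      replaceBlock j (e + 1) (extend E (merge m fun i => a (j + i))) a := by
  have block : (fun i => merge (j + m) a (j + i)) = merge m fun i => a (j + i) := by
    funext i
    simp only [merge, replaceBlock]
    grind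
  rw [applyAt, block]
  exact replaceBlock_replaceBlock_of_mem (by omega) (by omega) 2 _ _ a

theorem applyAt_merge_of_ge (j m : ℕ) :
    applyAt j E (merge (j + e + m) a) = merge (j + 1 + m) (applyAt j E a) := by
  have block : extend E (fun i => merge (j + e + m) a (j + i)) = extend E fun i => a (j + i) := by
    refine dependsOn_extend E fun i (hi : i < e) => ?_
    simp only [merge, replaceBlock]
    grind
  have product : applyAt j E a (j + 1 + m) * applyAt j E a (j + 1 + m + 1) =
      a (j + e + m) * a (j + e + m + 1) := by
    simp only [applyAt, replaceBlock]
    grind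
  rw [applyAt, block, merge, merge, product, applyAt,
    replaceBlock_replaceBlock_of_lt (show j < j + 1 + m by omega),
    show j + 1 + m + e - 1 = j + e + m by omega]

theorem merge_applyAt_self (j : ℕ) :
    merge j (applyAt j E a) =
      replaceBlock j (e + 1) (extend E (fun i => a (j + i)) * a (j + e)) a := by
  have product : applyAt j E a j * applyAt j E a (j + 1) =
      extend E (fun i => a (j + i)) * a (j + e) := by
    simp only [applyAt, replaceBlock]
    grind
  rw [merge, product, applyAt, replaceBlock_replaceBlock_of_mem le_rfl (by omega),
    show 2 + e - 1 = e + 1 by omega]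

theorem merge_applyAt_succ (j : ℕ) :
    merge j (applyAt (j + 1) E a) =
      replaceBlock j (e + 1) (a j * extend E fun i => a (j + 1 + i)) a := by
  have product : applyAt (j + 1) E a j * applyAt (j + 1) E a (j + 1) =
      a j * extend E fun i => a (j + 1 + i) := by
    simp only [applyAt, replaceBlock]
    grind
  rw [merge, product, applyAt, replaceBlock_replaceBlock_of_mem (by omega) (by omega)]
  congr 1
  omega

end Merge

end Sequences

section Restriction

theorem extend_res [Zero A] {n : ℕ} {F : (ℕ → A) → A}
    (hF : DependsOn F (Set.Iio n)) (a : ℕ → A) : extend (res n F) a = F a :=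
  hF fun i (hi : i < n) => by simp [pad, hi]

theorem pad_update [Zero A] {n : ℕ} (v : Fin n → A) (p : Fin n) (x : A) :
    pad (Function.update v p x) = Function.update (pad v) p x := by
  funext i
  grind [pad, Function.update]

end Restriction

section Operations

theorem hdel_apply [Ring A] {d : ℕ} (D : (Fin d → A) → A) (a : ℕ → A) :
    hdel d D a = extend D a * a d + (-1 : ℤ) ^ (d + 1) • (a 0 * extend D fun i => a (i + 1))
      + ∑ k ∈ Finset.range d, (-1 : ℤ) ^ (d + k) • extend D (merge k a) := by
  have sign (k : ℕ) : (-1 : ℤ) ^ (d + 1 + (k + 1)) = (-1) ^ (d + k) := by ring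
  exact congrArg (_ + ·) (Finset.sum_congr rfl fun k _ => congrArg (· • _) (sign k))

theorem circ_eq_sum_circAt [AddCommGroup A] {d e : ℕ} (D : (Fin d → A) → A)
    (E : (Fin e → A) → A) (a : ℕ → A) :
    circ d e D E a = ∑ j ∈ Finset.range d, (-1 : ℤ) ^ ((e + 1) * j) • circAt j D E a :=
  rfl

theorem dependsOn_circAt {d e j : ℕ} (hj : j < d) (D : (Fin d → A) → A) (E : (Fin e → A) → A) :
    DependsOn (circAt j D E) (Set.Iio (d + e - 1)) := by
  intro a b h
  have block : extend E (fun i => a (j + i)) = extend E fun i => b (j + i) :=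
    dependsOn_extend E fun i (hi : i < e) => h (j + i) (show j + i < d + e - 1 by omega)
  refine dependsOn_extend D fun i hi => ?_
  rw [applyAt, applyAt, block]
  exact replaceBlock_congr _ h hj i hi

theorem dependsOn_merge [Mul A] {d k : ℕ} (hk : k < d) (D : (Fin d → A) → A) :
    DependsOn (fun a => extend D (merge k a)) (Set.Iio (d + 1)) := by
  intro a b h
  refine dependsOn_extend D fun i hi => ?_
  rw [merge, merge, h k (show k < d + 1 by omega), h (k + 1) (show k + 1 < d + 1 by omega)]
  exact replaceBlock_congr _ h hk i hi

theorem dependsOn_hdel [Ring A] {d : ℕ} (D : (Fin d → A) → A) :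
    DependsOn (hdel d D) (Set.Iio (d + 1)) := by
  intro a b h
  have outer_left : extend D a = extend D b :=
    dependsOn_extend D fun i (hi : i < d) => h i (show i < d + 1 by omega)
  have outer_right : extend D (fun i => a (i + 1)) = extend D fun i => b (i + 1) :=
    dependsOn_extend D fun i (hi : i < d) => h (i + 1) (show i + 1 < d + 1 by omega)
  have inner (k : ℕ) (hk : k ∈ Finset.range d) :
      extend D (merge k a) = extend D (merge k b) :=
    dependsOn_merge (Finset.mem_range.1 hk) D h
  rw [hdel_apply, hdel_apply, outer_left, outer_right, h d (show d < d + 1 by omega),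
    h 0 (show 0 < d + 1 by omega)]
  congr 1
  exact Finset.sum_congr rfl fun k hk => by rw [inner k hk]

/-- The Hochschild differential as a homomorphism of additive groups, on all functions of `n`
variables, multilinear or not. -/
def hdelHom [Ring A] (n : ℕ) : ((Fin n → A) → A) →+ ((ℕ → A) → A) where
  toFun := hdel n
  map_zero' := by
    funext a
    simp [hdel]
  map_add' F G := by
    funext a
    simp only [hdel, Pi.add_apply, add_mul, mul_add, smul_add, Finset.sum_add_distrib]
    abel

theorem hdelHom_apply [Ring A] (n : ℕ) (F : (Fin n → A) → A) : hdelHom n F = hdel n F := rfl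

end Operations

section Multilinear

variable [CommRing K] [AddCommGroup A] [Module K A] {d e : ℕ}

theorem isLinearMap_extend_update (D : Cochain K A d) {j : ℕ} (hj : j < d) (a : ℕ → A) :
    IsLinearMap K fun y => extend D (Function.update a j y) := by
  have restrict (y : A) : extend D (Function.update a j y) =
      D (Function.update (fun i : Fin d => a i) ⟨j, hj⟩ y) := by
    refine congrArg D (funext fun i => ?_)
    simp only [Function.update_apply, Fin.ext_iff]
  simp only [restrict]
  exact (D.toLinearMap _ ⟨j, hj⟩).isLinear

theorem isLinearMap_extend_replaceBlock (D : Cochain K A d) {j : ℕ} (hj : j < d) (k : ℕ)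
    (a : ℕ → A) : IsLinearMap K fun y => extend D (replaceBlock j k y a) := by
  simpa only [← replaceBlock_eq_update] using
    isLinearMap_extend_update D hj (replaceBlock j k 0 a)

theorem isLinearMap_circAt_update (D : Cochain K A d) (E : Cochain K A e) {j p : ℕ} (hj : j < d)
    (hp : p < d + e - 1) (a : ℕ → A) :
    IsLinearMap K fun x => circAt j D E (Function.update a p x) := by
  rcases lt_or_ge p j with before | hjp
  · have block (x : A) : (fun i => Function.update a p x (j + i)) = fun i => a (j + i) := by
      grind
    simp only [circAt, applyAt, block, replaceBlock_update_of_lt before]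
    exact isLinearMap_extend_update D (before.trans hj) _
  rcases lt_or_ge p (j + e) with inside | after
  · have block (x : A) : (fun i => Function.update a p x (j + i)) =
        Function.update (fun i => a (j + i)) (p - j) x := by
      funext i
      simp only [Function.update_apply]
      grind
    simp only [circAt, applyAt, block, replaceBlock_update_of_mem hjp inside]
    exact ((isLinearMap_extend_replaceBlock D hj e a).mk' _ ∘ₗ
      (isLinearMap_extend_update E (by omega) _).mk' _).isLinear
  · have block (x : A) : extend E (fun i => Function.update a p x (j + i)) =
        extend E fun i => a (j + i) :=
      dependsOn_extend E fun i (hi : i < e) => Function.update_of_ne (by omega) x a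
    simp only [circAt, applyAt, block, replaceBlock_update_of_ge after]
    exact isLinearMap_extend_update D (by omega) _

theorem isLinearMap_circ_update (D : Cochain K A d) (E : Cochain K A e) {p : ℕ}
    (hp : p < d + e - 1) (a : ℕ → A) :
    IsLinearMap K fun x => circ d e D E (Function.update a p x) where
  map_add x y := by
    simp only [circ_eq_sum_circAt, ← Finset.sum_add_distrib, ← smul_add]
    exact Finset.sum_congr rfl fun j hj => congrArg _
      ((isLinearMap_circAt_update D E (Finset.mem_range.1 hj) hp a).map_add x y)
  map_smul c x := by
    simp only [circ_eq_sum_circAt, Finset.smul_sum, smul_comm c]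
    exact Finset.sum_congr rfl fun j hj => congrArg _
      ((isLinearMap_circAt_update D E (Finset.mem_range.1 hj) hp a).map_smul c x)

/-- The circle product of two multilinear cochains, as a multilinear cochain. -/
def circCochain (D : Cochain K A d) (E : Cochain K A e) : Cochain K A (d + e - 1) :=
  MultilinearMap.mk' (res (d + e - 1) (circ d e D E))
    (fun v p x y => by
      simpa only [res, pad_update] using (isLinearMap_circ_update D E p.2 (pad v)).map_add x y)
    (fun v p c x => by
      simpa only [res, pad_update] using (isLinearMap_circ_update D E p.2 (pad v)).map_smul c x)

theorem coe_circCochain (D : Cochain K A d) (E : Cochain K A e) :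
    ⇑(circCochain D E) = res (d + e - 1) (circ d e D E) :=
  rfl

end Multilinear

section Halves

variable [Ring A] {d e : ℕ}

/-- The terms of the Hochschild differential `δD` that involve products formed strictly to the
left of position `j`, the outer product `a 0 * D (a 1, …)` included. -/
def hdelLeft (j : ℕ) (D : (Fin d → A) → A) (a : ℕ → A) : A :=
  (-1 : ℤ) ^ (d + 1) • (a 0 * extend D fun i => a (i + 1))
    + ∑ k ∈ Finset.range j, (-1 : ℤ) ^ (d + k) • extend D (merge k a)

/-- The terms of the Hochschild differential `δD` complementary to those of `hdelLeft j`. -/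
def hdelRight (j : ℕ) (D : (Fin d → A) → A) (a : ℕ → A) : A :=
  extend D a * a d + ∑ k ∈ Finset.Ico j d, (-1 : ℤ) ^ (d + k) • extend D (merge k a)

theorem hdelRight_add_hdelLeft {j : ℕ} (hj : j ≤ d) (D : (Fin d → A) → A) (a : ℕ → A) :
    hdelRight j D a + hdelLeft j D a = hdel d D a := by
  rw [hdel_apply, hdelRight, hdelLeft, ← Finset.sum_range_add_sum_Ico _ hj]
  abel

theorem hdelRight_applyAt_self (D : (Fin d → A) → A) (E : (Fin e → A) → A) (a : ℕ → A) :
    hdelRight d D (applyAt d E a) = cup d e D E a := by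
  have head_eq : extend D (applyAt d E a) = extend D a :=
    dependsOn_extend D fun i (hi : i < d) => if_pos hi
  have entry : applyAt d E a d = extend E fun i => a (d + i) := by
    simp [applyAt, replaceBlock]
  rw [hdelRight, head_eq, entry, Finset.Ico_self, Finset.sum_empty, add_zero]
  rfl

theorem hdelLeft_applyAt_zero (D : (Fin d → A) → A) (E : (Fin e → A) → A) (a : ℕ → A) :
    hdelLeft 0 D (applyAt 0 E a) = (-1 : ℤ) ^ (d + 1) • cup e d E D a := by
  have tail_eq : (fun i => applyAt 0 E a (i + 1)) = fun i => a (e + i) := by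
    funext i
    simp only [applyAt, replaceBlock]
    grind
  have entry : applyAt 0 E a 0 = extend E a := by
    simp [applyAt, replaceBlock]
  rw [hdelLeft, tail_eq, entry, Finset.sum_range_zero, add_zero]
  rfl

end Halves

section Homotopy

variable [CommRing K] [Ring A] [Module K A] {d e : ℕ}

theorem sum_merge_inside (D : Cochain K A d) (E : (Fin e → A) → A) {j : ℕ} (hj : j < d)
    (a : ℕ → A) :
    ∑ m ∈ Finset.range e, (-1 : ℤ) ^ (e + m) • circAt j D E (merge (j + m) a) =
      circAt j D (res (e + 1) (hdel e E)) a - extend D (merge j (applyAt j E a))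
        - (-1 : ℤ) ^ (e + 1) • extend D (merge j (applyAt (j + 1) E a)) := by
  let slot := (isLinearMap_extend_replaceBlock D hj (e + 1) a).mk' _
  have slot_apply (y : A) : extend D (replaceBlock j (e + 1) y a) = slot y := rfl
  have block : (fun i => a (j + (i + 1))) = fun i => a (j + 1 + i) := by
    funext i
    congr 1
    omega
  have expand : circAt j D (res (e + 1) (hdel e E)) a =
      slot (hdel e E fun i => a (j + i)) := by
    rw [circAt, applyAt, extend_res (dependsOn_hdel E), slot_apply]
  have inside (m : ℕ) (hm : m ∈ Finset.range e) : circAt j D E (merge (j + m) a) =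
      slot (extend E (merge m fun i => a (j + i))) := by
    rw [circAt, applyAt_merge_of_mem E a (Finset.mem_range.1 hm), slot_apply]
  rw [Finset.sum_congr rfl fun m hm => congrArg _ (inside m hm), expand, hdel_apply,
    merge_applyAt_self, merge_applyAt_succ, slot_apply, slot_apply, block, add_zero]
  simp only [map_add, map_sum, map_zsmul]
  abel

theorem sum_merge (D : Cochain K A d) (E : (Fin e → A) → A) {j : ℕ} (hj : j < d) (a : ℕ → A) :
    ∑ k ∈ Finset.range (d + e - 1), (-1 : ℤ) ^ (d + e - 1 + k) • circAt j D E (merge k a) =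
      (-1 : ℤ) ^ (d + 1 + j) • circAt j D (res (e + 1) (hdel e E)) a
        + ∑ k ∈ Finset.Ico j d, (-1 : ℤ) ^ (d + k) • extend D (merge k (applyAt j E a))
        + (-1 : ℤ) ^ (e + 1) • ∑ k ∈ Finset.range (j + 1),
            (-1 : ℤ) ^ (d + k) • extend D (merge k (applyAt (j + 1) E a)) := by
  obtain ⟨r, rfl⟩ : ∃ r, d = j + r + 1 := ⟨d - j - 1, by omega⟩
  have left : ∑ k ∈ Finset.range j, (-1 : ℤ) ^ (j + e + r + k) • circAt j D E (merge k a) =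
      (-1 : ℤ) ^ (e + 1) • ∑ k ∈ Finset.range j,
        (-1 : ℤ) ^ (j + r + 1 + k) • extend D (merge k (applyAt (j + 1) E a)) := by
    rw [Finset.smul_sum]
    refine Finset.sum_congr rfl fun k hk => ?_
    rw [circAt, applyAt_merge_of_lt E a (Finset.mem_range.1 hk), smul_smul, ← pow_add]
    exact congrArg (· • _) (neg_one_pow_congr (by grind))
  have inside : ∑ m ∈ Finset.range e,
      (-1 : ℤ) ^ (j + e + r + (j + m)) • circAt j D E (merge (j + m) a) =
      (-1 : ℤ) ^ r • (circAt j D (res (e + 1) (hdel e E)) a - extend D (merge j (applyAt j E a))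
        - (-1 : ℤ) ^ (e + 1) • extend D (merge j (applyAt (j + 1) E a))) := by
    rw [← sum_merge_inside D E hj, Finset.smul_sum]
    refine Finset.sum_congr rfl fun m _ => ?_
    rw [smul_smul, ← pow_add]
    exact congrArg (· • _) (neg_one_pow_congr (by grind))
  have right : ∑ m ∈ Finset.range r,
      (-1 : ℤ) ^ (j + e + r + (j + e + m)) • circAt j D E (merge (j + e + m) a) =
      ∑ m ∈ Finset.range r,
        (-1 : ℤ) ^ (j + r + 1 + (j + 1 + m)) • extend D (merge (j + 1 + m) (applyAt j E a)) := by
    refine Finset.sum_congr rfl fun m _ => ?_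
    rw [circAt, applyAt_merge_of_ge]
    exact congrArg (· • _) (neg_one_pow_congr (by grind))
  have sign₁ : (-1 : ℤ) ^ (j + r + 1 + j) = -(-1) ^ r := by
    rw [← mul_neg_one (_ ^ r), ← pow_succ, neg_one_pow_congr (n := r + 1) (by grind)]
  have sign₂ : (-1 : ℤ) ^ (j + r + 1 + 1 + j) = (-1) ^ r := neg_one_pow_congr (by grind)
  rw [show j + r + 1 + e - 1 = j + e + r by omega, Finset.sum_range_add, Finset.sum_range_add,
    left, inside, right, Finset.sum_eq_sum_Ico_succ_bot hj, Finset.sum_Ico_eq_sum_range,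
    show j + r + 1 - (j + 1) = r by omega, Finset.sum_range_succ _ j, sign₁, sign₂]
  module

theorem hdel_circAt (D : Cochain K A d) (E : (Fin e → A) → A) {j : ℕ} (hj : j < d) (a : ℕ → A) :
    hdel (d + e - 1) (res (d + e - 1) (circAt j D E)) a =
      (-1 : ℤ) ^ (d + 1 + j) • circAt j D (res (e + 1) (hdel e E)) a
        + hdelRight j D (applyAt j E a)
        + (-1 : ℤ) ^ (e + 1) • hdelLeft (j + 1) D (applyAt (j + 1) E a) := by
  have last : applyAt j E a d = a (d + e - 1) := by
    simp only [applyAt, replaceBlock]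
    grind
  have first : applyAt (j + 1) E a 0 = a 0 := by
    simp [applyAt, replaceBlock]
  have tail : (fun i => applyAt (j + 1) E a (i + 1)) = applyAt j E fun i => a (i + 1) := by
    have block : (fun i => a (j + 1 + i)) = fun i => a (j + i + 1) := by
      funext i
      congr 1
      omega
    funext i
    simp only [applyAt, replaceBlock, block]
    grind
  have sign : (-1 : ℤ) ^ (d + e - 1 + 1) = (-1) ^ (e + 1) * (-1) ^ (d + 1) := by
    rw [← pow_add]
    exact neg_one_pow_congr (by grind)
  simp only [hdel_apply, extend_res (dependsOn_circAt hj D E)]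
  rw [sum_merge D E hj, hdelRight, hdelLeft, last, first, tail, sign, mul_smul, smul_add]
  simp only [circAt]
  abel

theorem hdel_circ_eq_sum (D : Cochain K A d) (E : (Fin e → A) → A) (a : ℕ → A) :
    hdel (d + e - 1) (res (d + e - 1) (circ d e D E)) a =
      ∑ j ∈ Finset.range d, (-1 : ℤ) ^ ((e + 1) * j) •
        hdel (d + e - 1) (res (d + e - 1) (circAt j D E)) a := by
  have expand : res (d + e - 1) (circ d e D E) = ∑ j ∈ Finset.range d,
      (-1 : ℤ) ^ ((e + 1) * j) • res (d + e - 1) (circAt j D E) := by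
    funext v
    simp only [Finset.sum_apply, Pi.smul_apply]
    rfl
  rw [expand, ← hdelHom_apply]
  simp only [map_sum, map_zsmul, Finset.sum_apply, Pi.smul_apply, hdelHom_apply]

theorem circ_hdel_left (D : (Fin d → A) → A) (E : (Fin e → A) → A) (a : ℕ → A) :
    circ (d + 1) e (res (d + 1) (hdel d D)) E a =
      ∑ j ∈ Finset.range (d + 1), (-1 : ℤ) ^ ((e + 1) * j) •
        (hdelRight j D (applyAt j E a) + hdelLeft j D (applyAt j E a)) := by
  rw [circ_eq_sum_circAt]
  refine Finset.sum_congr rfl fun j hj => ?_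
  rw [circAt, extend_res (dependsOn_hdel D),
    hdelRight_add_hdelLeft (Nat.lt_succ_iff.1 (Finset.mem_range.1 hj))]

theorem hdel_circ (D : Cochain K A d) (E : (Fin e → A) → A) (a : ℕ → A) :
    hdel (d + e - 1) (res (d + e - 1) (circ d e D E)) a =
      circ (d + 1) e (res (d + 1) (hdel d D)) E a
        + (-1 : ℤ) ^ (d + 1) • circ d (e + 1) D (res (e + 1) (hdel e E)) a
        - (-1 : ℤ) ^ ((e + 1) * d) •
          (cup d e D E a - (-1 : ℤ) ^ (d * e) • cup e d E D a) := by
  have term (j : ℕ) (hj : j ∈ Finset.range d) :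
      (-1 : ℤ) ^ ((e + 1) * j) • hdel (d + e - 1) (res (d + e - 1) (circAt j D E)) a =
        (-1 : ℤ) ^ (d + 1) • (-1 : ℤ) ^ ((e + 1 + 1) * j) • circAt j D (res (e + 1) (hdel e E)) a
          + (-1 : ℤ) ^ ((e + 1) * j) • hdelRight j D (applyAt j E a)
          + (-1 : ℤ) ^ ((e + 1) * (j + 1)) • hdelLeft (j + 1) D (applyAt (j + 1) E a) := by
    rw [hdel_circAt D E (Finset.mem_range.1 hj)]
    module
  have cup_sign : (-1 : ℤ) ^ ((e + 1) * d) * (-1) ^ (d * e) = (-1) ^ d := by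
    rw [← pow_add]
    exact neg_one_pow_congr (by grind)
  rw [hdel_circ_eq_sum, Finset.sum_congr rfl term, circ_hdel_left, circ_eq_sum_circAt D,
    smul_sub, smul_smul, cup_sign]
  simp only [smul_add, Finset.sum_add_distrib, ← Finset.smul_sum]
  rw [Finset.sum_range_succ _ d, Finset.sum_range_succ' _ d, hdelRight_applyAt_self,
    hdelLeft_applyAt_zero]
  module

end Homotopy

section Cocycles

theorem circ_zero_left [AddCommGroup A] {d e : ℕ} (E : (Fin e → A) → A) (a : ℕ → A) :
    circ d e 0 E a = 0 := by
  simp [circ]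

theorem circ_zero_right [CommRing K] [AddCommGroup A] [Module K A] {d e : ℕ} (D : Cochain K A d)
    (a : ℕ → A) : circ d e D 0 a = 0 := by
  rw [circ_eq_sum_circAt]
  refine Finset.sum_eq_zero fun j hj => ?_
  have vanish : circAt j D (0 : (Fin e → A) → A) a = 0 :=
    (isLinearMap_extend_replaceBlock D (Finset.mem_range.1 hj) e a).map_zero
  rw [vanish, smul_zero]

theorem cup_sub_cup_of_cocycles [CommRing K] [Ring A] [Module K A] {d e : ℕ} (D : Cochain K A d)
    (E : (Fin e → A) → A) (hD : res (d + 1) (hdel d D) = 0) (hE : res (e + 1) (hdel e E) = 0)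
    (a : ℕ → A) :
    cup d e D E a - (-1 : ℤ) ^ (d * e) • cup e d E D a =
      (-1 : ℤ) ^ ((e + 1) * d + 1) • hdel (d + e - 1) (res (d + e - 1) (circ d e D E)) a := by
  rw [hdel_circ, hD, hE, circ_zero_left, circ_zero_right, smul_zero, add_zero, zero_sub, pow_succ,
    mul_neg_one, neg_smul_neg, smul_smul, ← mul_pow]
  simp

end Cocycles

theorem statement7_general {K A : Type*} [CommRing K] [Ring A] [Module K A]
    (d e : ℕ) (D : Cochain K A d) (E : Cochain K A e)
    (hD : ∀ a : Fin (d + 1) → A, res (d + 1) (hdel d ⇑D) a = 0)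
    (hE : ∀ a : Fin (e + 1) → A, res (e + 1) (hdel e ⇑E) a = 0) :
    ∃ G : Cochain K A (d + e - 1),
      (∃ s : ℤˣ, ∀ v : Fin (d + e - 1) → A,
        G v = (s : ℤ) • res (d + e - 1) (circ d e ⇑D ⇑E) v) ∧
      ∀ a : Fin (d + e) → A,
        res (d + e) (cup d e ⇑D ⇑E) a - ((-1 : ℤ) ^ (d * e)) • res (d + e) (cup e d ⇑E ⇑D) a
          = res (d + e) (hdel (d + e - 1) ⇑G) a := by
  let s : ℤˣ := (-1) ^ ((e + 1) * d + 1)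
  have coe_primitive : ⇑((s : ℤ) • circCochain D E) =
      (s : ℤ) • res (d + e - 1) (circ d e D E) :=
    congrArg ((s : ℤ) • ·) (coe_circCochain D E)
  refine ⟨(s : ℤ) • circCochain D E, ⟨s, congrFun coe_primitive⟩, fun a => ?_⟩
  have coe_sign : (s : ℤ) = (-1) ^ ((e + 1) * d + 1) := by simp [s]
  rw [coe_primitive, ← hdelHom_apply, map_zsmul, hdelHom_apply, coe_sign]
  exact cup_sub_cup_of_cocycles D E (funext hD) (funext hE) (pad a)

/-- The cup product is graded commutative up to a coboundary on cocycles: if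
`D ∈ C^d(A)` and `E ∈ C^e(A)` satisfy `δD = 0` and `δE = 0`, then
`D⌣E − (−1)^{de} E⌣D` lies in the image of `δ : C^{d+e−1}(A) → C^{d+e}(A)`
(an explicit primitive is given, up to sign, by the circle product `D∘E`).
In particular the cup product induces a graded commutative product on Hochschild cohomology. -/
theorem statement7 {K A : Type*} [CommRing K] [Algebra ℚ K] [Ring A] [Algebra K A]
    (d e : ℕ) (D : Cochain K A d) (E : Cochain K A e)
    (hD : ∀ a : Fin (d + 1) → A, res (d + 1) (hdel d ⇑D) a = 0)
    (hE : ∀ a : Fin (e + 1) → A, res (e + 1) (hdel e ⇑E) a = 0) :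
    ∃ G : Cochain K A (d + e - 1),
      (∃ s : ℤˣ, ∀ v : Fin (d + e - 1) → A,
        G v = (s : ℤ) • res (d + e - 1) (circ d e ⇑D ⇑E) v) ∧
      ∀ a : Fin (d + e) → A,
        res (d + e) (cup d e ⇑D ⇑E) a - ((-1 : ℤ) ^ (d * e)) • res (d + e) (cup e d ⇑E ⇑D) a
          = res (d + e) (hdel (d + e - 1) ⇑G) a := by
  exact statement7_general d e D E hD hE

end NCCalc
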